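/- Consider the Markov kernel κ on S = ℝ × [−Δ/2, Δ/2] defined below, with |R| < 1, W > 0, Δ > 0, and let π be its invariant probability measure equivalent to Lebesgue measure. Then for Lebesgue-almost every initial state (e₀, d₀) ∈ S, the n-step transition probabilities converge to π in total variation: lim_{n→∞} sup_{B Borel ⊆ S} |π(B) − κⁿ((e₀, d₀), B)| = 0. -/

import Mathlib

/-!
The proof is Harris' ergodic theorem, run on test functions.

* **Drift.** The quantization error `Q_Δ(y) - y` is at most `Δ/2` in absolute value, so
  `|M(e, d)| ≤ |R| |e| + |L| Δ/2`, and `V(e, d) = |e|` satisfies `∫ V dκ(p, ·) ≤ |R| V(p) + K`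
  with `|R| < 1`.
* **Minorization.** On `{V ≤ r}` the means `M(p)` stay bounded, so the Gaussian densities are
  bounded below by one positive constant on `[0, 1]`; hence all `κ(p, ·)` with `V(p) ≤ r` dominate
  a common nonzero measure.

As in the argument of Hairer and Mattingly, for a suitable `β > 0` these two facts make the Markov
operator contract, by a factor `α < 1`, the oscillation of test functions measured against
`2 + β V(x) + β V(y)` (`exists_contraction`). Iterating on the indicator of `B` and integrating in
`y` against the invariant measure `π` gives
`|π(B) - κⁿ(p, B)| ≤ ∫ min(1, αⁿ (2 + β V(p) + β V(y))) dπ(y)`, uniformly in `B`; the right-hand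
side tends to `0` by dominated convergence. No integrability of `V` under `π` is needed, and the
convergence holds from every starting point.
-/

open MeasureTheory ProbabilityTheory Real Set Filter
open scoped ENNReal NNReal

noncomputable section

/-- Uniform quantizer with step `Δ`: `Qd Δ x = kΔ` whenever `x ∈ [kΔ - Δ/2, kΔ + Δ/2)`. -/
def Qd (Δ x : ℝ) : ℝ := Δ * ⌊x / Δ + 1 / 2⌋

/-- Uniform probability distribution on `[-Δ/2, Δ/2]`. -/
def unif (Δ : ℝ) : Measure ℝ :=
  (ENNReal.ofReal Δ)⁻¹ • (volume.restrict (Set.Icc (-(Δ / 2)) (Δ / 2)))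

/-- The drift map `M(e, d) = R·e − L·(Q_Δ(C·e + d) − d − C·e)`. -/
def Mfun (R L C Δ : ℝ) (p : ℝ × ℝ) : ℝ :=
  R * p.1 - L * (Qd Δ (C * p.1 + p.2) - p.2 - C * p.1)

/-- Lebesgue measure on the state space `S = ℝ × [-Δ/2, Δ/2]`. -/
def lebS (Δ : ℝ) : Measure (ℝ × ℝ) :=
  (volume : Measure ℝ).prod (volume.restrict (Set.Icc (-(Δ / 2)) (Δ / 2)))

/-- The state space `S = ℝ × [-Δ/2, Δ/2]` as a subset of `ℝ × ℝ`. -/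
def stateSet (Δ : ℝ) : Set (ℝ × ℝ) := Set.univ ×ˢ Set.Icc (-(Δ / 2)) (Δ / 2)

/-- `n`-step transition probability of the kernel `κ` started at the point `p`. -/
def nstep (κ : Kernel (ℝ × ℝ) (ℝ × ℝ)) (n : ℕ) (p : ℝ × ℝ) : Measure (ℝ × ℝ) :=
  (fun mm : Measure (ℝ × ℝ) => mm.bind (fun q => κ q))^[n] (Measure.dirac p)

/-! ### Markov operators and test functions -/

/-- The Markov operator `φ ↦ (x ↦ ∫ φ dκ(x, ·))` of a kernel, acting on real test functions. -/
def mop (κ : Kernel (ℝ × ℝ) (ℝ × ℝ)) (φ : ℝ × ℝ → ℝ) : ℝ × ℝ → ℝ := fun x => ∫ y, φ y ∂(κ x)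

/-- Measurable test functions with values in `[0, 1]`, a class preserved by Markov operators. -/
def IsTest (φ : ℝ × ℝ → ℝ) : Prop := Measurable φ ∧ ∀ x, 0 ≤ φ x ∧ φ x ≤ 1

lemma IsTest.integrable {φ : ℝ × ℝ → ℝ} (h : IsTest φ) (μ : Measure (ℝ × ℝ)) [IsFiniteMeasure μ] :
    Integrable φ μ :=
  Integrable.of_bound h.1.aestronglyMeasurable 1 (ae_of_all _ fun x => by
    rw [Real.norm_eq_abs, abs_le]; constructor <;> linarith [(h.2 x).1, (h.2 x).2])

lemma isTest_mop {κ : Kernel (ℝ × ℝ) (ℝ × ℝ)} [IsMarkovKernel κ] {φ : ℝ × ℝ → ℝ} (h : IsTest φ) :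
    IsTest (mop κ φ) := by
  refine ⟨(h.1.stronglyMeasurable.integral_kernel (κ := κ)).measurable, fun x => ⟨?_, ?_⟩⟩
  · exact integral_nonneg fun y => (h.2 y).1
  · have := integral_mono (h.integrable (κ x)) (integrable_const 1) (fun y => (h.2 y).2)
    simpa [mop] using this

lemma isTest_mop_iterate {κ : Kernel (ℝ × ℝ) (ℝ × ℝ)} [IsMarkovKernel κ] {φ : ℝ × ℝ → ℝ}
    (h : IsTest φ) (n : ℕ) : IsTest ((mop κ)^[n] φ) := by
  induction n with
  | zero => exact h
  | succ n ih => rw [Function.iterate_succ_apply']; exact isTest_mop ih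

lemma integral_bind_eq_mop (κ : Kernel (ℝ × ℝ) (ℝ × ℝ)) [IsMarkovKernel κ]
    (μ : Measure (ℝ × ℝ)) [IsProbabilityMeasure μ] {φ : ℝ × ℝ → ℝ} (h : IsTest φ) :
    ∫ x, φ x ∂(μ.bind fun q => κ q) = ∫ x, mop κ φ x ∂μ := by
  have := Kernel.integral_comp (η := κ) (κ := Kernel.const Unit μ) (a := ()) (f := φ)
    (h.integrable _)
  simpa [Kernel.comp_apply, mop] using this

/-- Duality between the forward evolution of measures and the Markov operator. -/
lemma integral_iterate_bind (κ : Kernel (ℝ × ℝ) (ℝ × ℝ)) [IsMarkovKernel κ]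
    (μ : Measure (ℝ × ℝ)) [IsProbabilityMeasure μ] (n : ℕ) :
    IsProbabilityMeasure ((fun mm : Measure (ℝ × ℝ) => mm.bind (fun q => κ q))^[n] μ) ∧
    ∀ φ, IsTest φ → ∫ x, φ x ∂((fun mm : Measure (ℝ × ℝ) => mm.bind (fun q => κ q))^[n] μ)
      = ∫ x, ((mop κ)^[n] φ) x ∂μ := by
  induction n with
  | zero => exact ⟨by simpa, fun φ _ => rfl⟩
  | succ n ih =>
    have := ih.1
    rw [Function.iterate_succ_apply']
    refine ⟨inferInstanceAs (IsProbabilityMeasure (Measure.bind _ κ)), fun φ hφ => ?_⟩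
    rw [integral_bind_eq_mop κ _ hφ, ih.2 _ (isTest_mop hφ), Function.iterate_succ_apply]

/-! ### Weighted contraction from drift and minorization -/

/-- A function whose oscillation between `x` and `y` is at most `w x + w y` is within `w` of a
constant. -/
lemma exists_center (φ w : ℝ × ℝ → ℝ) (h : ∀ x y, |φ x - φ y| ≤ w x + w y) :
    ∃ c, ∀ x, |φ x - c| ≤ w x := by
  have key : ∀ x y, φ x - w x ≤ φ y + w y := fun x y => by
    linarith [(abs_le.1 (h x y)).2]
  refine ⟨⨆ x, (φ x - w x), fun x => ?_⟩
  have h1 : φ x - w x ≤ ⨆ x, (φ x - w x) :=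
    le_ciSup (f := fun x => φ x - w x) ⟨φ 0 + w 0, by rintro _ ⟨z, rfl⟩; exact key z 0⟩ x
  have h2 : ⨆ x, (φ x - w x) ≤ φ x + w x := ciSup_le fun z => key z x
  rw [abs_le]; constructor <;> linarith

/-- If `ν ≤ μ` and `|g| ≤ w`, the part of `μ` carried by `ν` contributes nothing to the bound on
`∫ g dμ - ∫ g dν`. -/
lemma abs_integral_sub_le_of_le {μ ν : Measure (ℝ × ℝ)} (hle : ν ≤ μ)
    {g w : ℝ × ℝ → ℝ} (hg : Integrable g μ) (hw : Integrable w μ) (h : ∀ x, |g x| ≤ w x) :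
    |∫ x, g x ∂μ - ∫ x, g x ∂ν| ≤ ∫ x, w x ∂μ - ∫ x, w x ∂ν := by
  have h1 := integral_mono_measure hle (f := fun x => w x - g x)
    (ae_of_all _ fun x => by simpa using (abs_le.1 (h x)).2) (hw.sub hg)
  have h2 := integral_mono_measure hle (f := fun x => w x + g x)
    (ae_of_all _ fun x => by
      have := (abs_le.1 (h x)).1
      simp only [Pi.zero_apply]; linarith) (hw.add hg)
  have hg' := hg.mono_measure hle
  have hw' := hw.mono_measure hle
  rw [integral_sub hw hg, integral_sub hw' hg'] at h1
  rw [integral_add hw hg, integral_add hw' hg'] at h2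
  rw [abs_le]; constructor <;> linarith

/-- If `κ x` and `κ y` share the component `ν`, then their actions on a function oscillating by at
most `A (2 + β V + β V)` differ by at most the drifted weight minus twice the shared mass. -/
lemma abs_mop_sub_le {κ : Kernel (ℝ × ℝ) (ℝ × ℝ)} [IsMarkovKernel κ] {V : ℝ × ℝ → ℝ}
    (hV0 : ∀ x, 0 ≤ V x) (hVi : ∀ x, Integrable V (κ x)) {γ K : ℝ}
    (hdrift : ∀ x, ∫ y, V y ∂(κ x) ≤ γ * V x + K) {β A : ℝ} (hβ : 0 ≤ β) (hA : 0 ≤ A)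
    {φ : ℝ × ℝ → ℝ} (hφ : IsTest φ)
    (hosc : ∀ x y, |φ x - φ y| ≤ A * (2 + β * V x + β * V y))
    {x y : ℝ × ℝ} {ν : Measure (ℝ × ℝ)} (hx : ν ≤ κ x) (hy : ν ≤ κ y) :
    |mop κ φ x - mop κ φ y| ≤
      A * (2 + β * (γ * (V x + V y) + 2 * K) - 2 * ν.real Set.univ) := by
  obtain ⟨c, hc⟩ := exists_center φ (fun x => A * (1 + β * V x))
    (fun x y => (hosc x y).trans (le_of_eq (by ring)))
  have : IsFiniteMeasure ν := isFiniteMeasure_of_le _ hx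
  have hwi : ∀ {μ : Measure (ℝ × ℝ)} [IsFiniteMeasure μ], Integrable V μ →
      Integrable (fun x => A * (1 + β * V x)) μ := fun h =>
    ((integrable_const 1).add (h.const_mul β)).const_mul A
  have hw : ∀ {μ : Measure (ℝ × ℝ)} [IsFiniteMeasure μ], Integrable V μ →
      ∫ x, A * (1 + β * V x) ∂μ = A * (μ.real Set.univ + β * ∫ x, V x ∂μ) := fun h => by
    rw [integral_const_mul, integral_add (integrable_const 1) (h.const_mul β),
      integral_const_mul]; simp
  have hgi : ∀ (μ : Measure (ℝ × ℝ)) [IsFiniteMeasure μ], Integrable (fun x => φ x - c) μ :=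
    fun μ _ => (hφ.integrable μ).sub (integrable_const c)
  have hg : ∀ z, ∫ u, (φ u - c) ∂(κ z) = mop κ φ z - c := fun z => by
    rw [integral_sub (hφ.integrable _) (integrable_const c)]; simp [mop]
  have hVν := (hVi x).mono_measure hx
  have hν0 : 0 ≤ ∫ u, V u ∂ν := integral_nonneg hV0
  have h1 := abs_integral_sub_le_of_le hx (hgi _) (hwi (hVi x)) hc
  have h2 := abs_integral_sub_le_of_le hy (hgi _) (hwi (hVi y)) hc
  rw [hg, hw (hVi _), hw hVν] at h1 h2
  simp only [probReal_univ] at h1 h2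
  have e1 : A * (β * ∫ u, V u ∂(κ x)) ≤ A * (β * (γ * V x + K)) := by gcongr; exact hdrift x
  have e2 : A * (β * ∫ u, V u ∂(κ y)) ≤ A * (β * (γ * V y + K)) := by gcongr; exact hdrift y
  have e3 : 0 ≤ A * (β * ∫ u, V u ∂ν) := by positivity
  rw [abs_le] at h1 h2 ⊢
  constructor <;> linarith

/-- Under a drift condition and a minorization on every sublevel set of `V`, the Markov operator
contracts the oscillation seminorm weighted by `2 + β V x + β V y`. -/
lemma exists_contraction (κ : Kernel (ℝ × ℝ) (ℝ × ℝ)) [IsMarkovKernel κ] (V : ℝ × ℝ → ℝ)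
    (hV0 : ∀ x, 0 ≤ V x) (hVi : ∀ x, Integrable V (κ x))
    (γ K : ℝ) (hγ0 : 0 ≤ γ) (hγ : γ < 1) (hK : 0 ≤ K)
    (hdrift : ∀ x, ∫ y, V y ∂(κ x) ≤ γ * V x + K)
    (hmin : ∀ r : ℝ, ∃ ν : Measure (ℝ × ℝ), 0 < ν.real Set.univ ∧ ∀ x, V x ≤ r → ν ≤ κ x) :
    ∃ α β : ℝ, 0 ≤ α ∧ α < 1 ∧ 0 < β ∧ ∀ φ, IsTest φ → ∀ A : ℝ, 0 ≤ A →
      (∀ x y, |φ x - φ y| ≤ A * (2 + β * V x + β * V y)) →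
      ∀ x y, |mop κ φ x - mop κ φ y| ≤ (A * α) * (2 + β * V x + β * V y) := by
  obtain ⟨ν, ha, hν⟩ := hmin ((4 * K + 2) / (1 - γ))
  have hγ' : 0 < 1 - γ := by linarith
  set a := ν.real Set.univ with ha_def
  -- `β` is small enough that the shared mass `a` absorbs the additive drift constant `2 * β * K`.
  obtain ⟨β, hβ, hβa⟩ : ∃ β : ℝ, 0 < β ∧ 2 * β * K ≤ a := by
    refine ⟨a / (2 * K + 1), by positivity, ?_⟩
    have : a / (2 * K + 1) * (2 * K + 1) = a := by field_simp
    have : 0 < a / (2 * K + 1) := by positivity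
    linarith
  obtain ⟨t, ht, ht1, ht2, ht3⟩ : ∃ t : ℝ, 0 < t ∧ t ≤ a / 2 ∧ t ≤ (1 - γ) / 2 ∧ t ≤ β / 2 :=
    ⟨min (a / 2) (min ((1 - γ) / 2) (β / 2)), by positivity, min_le_left _ _,
      (min_le_right _ _).trans (min_le_left _ _), (min_le_right _ _).trans (min_le_right _ _)⟩
  refine ⟨1 - t, β, by linarith, by linarith, hβ, fun φ hφ A hA hosc x y => ?_⟩
  have hS : 0 ≤ V x + V y := add_nonneg (hV0 x) (hV0 y)
  rw [mul_assoc]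
  by_cases hxy : V x + V y ≤ (4 * K + 2) / (1 - γ)
  · refine (abs_mop_sub_le hV0 hVi hdrift hβ.le hA hφ hosc (hν x (by linarith [hV0 y]))
      (hν y (by linarith [hV0 x]))).trans (mul_le_mul_of_nonneg_left ?_ hA)
    have : 0 ≤ β * (V x + V y) * (1 - γ - t) :=
      mul_nonneg (by positivity) (by linarith)
    nlinarith
  · refine (abs_mop_sub_le hV0 hVi hdrift hβ.le hA hφ hosc (Measure.zero_le (κ x))
      (Measure.zero_le (κ y))).trans (mul_le_mul_of_nonneg_left ?_ hA)
    -- Away from the sublevel set the drift alone gains at least `β`.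
    have h1 : 4 * K + 2 ≤ (V x + V y) * (1 - γ) := by
      rw [not_le, div_lt_iff₀ hγ'] at hxy; exact hxy.le
    have h2 : 0 ≤ β * (V x + V y) * ((1 - γ) / 2 - t) :=
      mul_nonneg (by positivity) (by linarith)
    have h3 : 0 ≤ β * ((V x + V y) * (1 - γ) - (4 * K + 2)) :=
      mul_nonneg hβ.le (by linarith)
    simp only [measureReal_zero, Pi.zero_apply]
    nlinarith

/-! ### Drift and minorization for the quantized kernel -/

lemma abs_Qd_sub_le {Δ : ℝ} (hΔ : 0 < Δ) (y : ℝ) : |Qd Δ y - y| ≤ Δ / 2 := by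
  have h1 := Int.floor_le (y / Δ + 1 / 2)
  have h2 := Int.lt_floor_add_one (y / Δ + 1 / 2)
  have hy : Δ * (y / Δ) = y := by field_simp
  have h3 := mul_le_mul_of_nonneg_left h1 hΔ.le
  have h4 := mul_le_mul_of_nonneg_left h2.le hΔ.le
  unfold Qd
  rw [abs_le]; constructor <;> linarith

lemma abs_Mfun_le (R L C : ℝ) {Δ : ℝ} (hΔ : 0 < Δ) (p : ℝ × ℝ) :
    |Mfun R L C Δ p| ≤ |R| * |p.1| + |L| * (Δ / 2) := by
  have h := abs_Qd_sub_le hΔ (C * p.1 + p.2)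
  have e : Mfun R L C Δ p = R * p.1 - L * (Qd Δ (C * p.1 + p.2) - (C * p.1 + p.2)) := by
    unfold Mfun; ring
  rw [e]
  refine (abs_sub _ _).trans ?_
  rw [abs_mul, abs_mul]
  gcongr

lemma isProbabilityMeasure_unif {Δ : ℝ} (hΔ : 0 < Δ) : IsProbabilityMeasure (unif Δ) := by
  constructor
  have : Δ / 2 + Δ / 2 = Δ := by ring
  simp [unif, this, ENNReal.inv_mul_cancel, hΔ]

lemma integrable_abs_gaussianReal (m : ℝ) (v : ℝ≥0) :
    Integrable (fun x : ℝ => |x|) (gaussianReal m v) :=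
  ((memLp_id_gaussianReal (μ := m) (v := v) 1).integrable (by simp)).abs

lemma integral_abs_gaussianReal_le (m : ℝ) (v : ℝ≥0) :
    ∫ x, |x| ∂(gaussianReal m v) ≤ |m| + ∫ x, |x| ∂(gaussianReal 0 v) := by
  have h : gaussianReal m v = (gaussianReal 0 v).map (· + m) := by
    rw [gaussianReal_map_add_const, zero_add]
  have hi := integrable_abs_gaussianReal 0 v
  have hj := integrable_abs_gaussianReal m v
  rw [h] at hj ⊢
  rw [integral_map (by fun_prop) (by fun_prop)]
  calc ∫ x, |x + m| ∂(gaussianReal 0 v) ≤ ∫ x, (|x| + |m|) ∂(gaussianReal 0 v) :=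
        integral_mono (hj.comp_measurable (by fun_prop)) (hi.add (integrable_const _))
          (fun x => abs_add_le _ _)
    _ = _ := by rw [integral_add hi (integrable_const _)]; simp [add_comm]

/-- Gaussians of fixed variance and bounded mean share a multiple of Lebesgue measure on
`[0, 1]`. -/
lemma exists_smul_volume_le_gaussianReal {v : ℝ≥0} (hv : v ≠ 0) (r : ℝ) :
    ∃ c : ℝ, 0 < c ∧ ∀ m : ℝ, |m| ≤ r →
      ENNReal.ofReal c • volume.restrict (Set.Icc (0 : ℝ) 1) ≤ gaussianReal m v := by
  have hv' : (0 : ℝ) < v := by exact_mod_cast pos_iff_ne_zero.2 hv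
  refine ⟨(√(2 * π * v))⁻¹ * Real.exp (-(1 + r) ^ 2 / (2 * v)), by positivity, fun m hm => ?_⟩
  rw [gaussianReal_of_var_ne_zero _ hv, ← withDensity_const, ← withDensity_indicator
    measurableSet_Icc]
  refine withDensity_mono (ae_of_all _ fun x => ?_)
  by_cases hx : x ∈ Set.Icc (0 : ℝ) 1
  · rw [Set.indicator_of_mem hx, gaussianPDF]
    refine ENNReal.ofReal_le_ofReal ?_
    unfold gaussianPDFReal
    have : (x - m) ^ 2 ≤ (1 + r) ^ 2 := by
      rw [abs_le] at hm
      apply sq_le_sq' <;> linarith [hx.1, hx.2]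
    gcongr
  · rw [Set.indicator_of_notMem hx]; exact bot_le


theorem nstep_tendsto_invariant_total_variation
    (R L C Δ W : ℝ) (hR : |R| < 1) (hW : 0 < W) (hΔ : 0 < Δ)
    (κ : Kernel (ℝ × ℝ) (ℝ × ℝ))
    (hκ : ∀ p : ℝ × ℝ,
      κ p = (gaussianReal (Mfun R L C Δ p) W.toNNReal).prod (unif Δ))
    (pm : Measure (ℝ × ℝ)) (hprob : IsProbabilityMeasure pm)
    (hinv : pm.bind (fun p => κ p) = pm)
    (hac : pm ≪ lebS Δ) (hac' : lebS Δ ≪ pm) :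
    ∀ᵐ p ∂(lebS Δ),
      Tendsto (fun n : ℕ =>
          ⨆ (B : Set (ℝ × ℝ)) (_ : MeasurableSet B),
            |(pm B).toReal - ((nstep κ n p) B).toReal|)
        atTop (nhds 0) := by
  have hunif := isProbabilityMeasure_unif hΔ
  have hW' : W.toNNReal ≠ 0 := by simpa using hW
  have hmk : IsMarkovKernel κ := ⟨fun p => by rw [hκ]; infer_instance⟩
  have hVi : ∀ p, Integrable (fun q : ℝ × ℝ => |q.1|) (κ p) := fun p => by
    rw [hκ]; exact (integrable_abs_gaussianReal _ _).comp_fst _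
  obtain ⟨α, β, hα0, hα1, hβ, hcontr⟩ := exists_contraction κ (fun q => |q.1|)
    (fun q => abs_nonneg _) hVi |R|
    (|L| * (Δ / 2) + ∫ x, |x| ∂(gaussianReal 0 W.toNNReal)) (abs_nonneg _) hR
    (add_nonneg (by positivity) (integral_nonneg fun x => abs_nonneg x))
    (fun p => by
      rw [hκ, integral_fun_fst (fun e : ℝ => |e|)]
      simp only [probReal_univ, one_smul]
      linarith [integral_abs_gaussianReal_le (Mfun R L C Δ p) W.toNNReal,
        abs_Mfun_le R L C hΔ p])
    (fun r => by
      obtain ⟨c, hc, hle⟩ := exists_smul_volume_le_gaussianReal hW'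
        (|R| * r + |L| * (Δ / 2))
      refine ⟨(ENNReal.ofReal c • volume.restrict (Set.Icc (0 : ℝ) 1)).prod (unif Δ), ?_, ?_⟩
      · simp [measureReal_def, ← Set.univ_prod_univ, Measure.prod_prod, hc.le, hc]
      · intro p hp
        rw [hκ]
        refine Measure.prod_mono (hle _ ((abs_Mfun_le R L C hΔ p).trans ?_)) le_rfl
        gcongr)
  have hiter : ∀ φ, IsTest φ → ∀ (n : ℕ) x y, |((mop κ)^[n] φ) x - ((mop κ)^[n] φ) y| ≤
      α ^ n * (2 + β * |x.1| + β * |y.1|) := by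
    intro φ hφ n
    induction n with
    | zero =>
      intro x y
      have h1 : 0 ≤ β * |x.1| := by positivity
      have h2 : 0 ≤ β * |y.1| := by positivity
      have h3 := hφ.2 x
      have h4 := hφ.2 y
      simp only [Function.iterate_zero, id, pow_zero, one_mul]
      rw [abs_le]; constructor <;> linarith
    | succ n ih =>
      intro x y
      rw [Function.iterate_succ_apply', pow_succ]
      exact hcontr _ (isTest_mop_iterate hφ n) _ (by positivity) ih x y
  refine ae_of_all _ fun p => ?_
  -- The dominating integrand; the truncation at `1` replaces integrability of `|e|` under `pm`.
  let F : ℕ → ℝ × ℝ → ℝ := fun n y => min 1 (α ^ n * (2 + β * |p.1| + β * |y.1|))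
  have hF0 : ∀ n y, 0 ≤ F n y := fun n y => by positivity
  have hFm : ∀ n, Measurable (F n) := fun n => by
    refine measurable_const.min ?_
    fun_prop
  have hFb : ∀ n y, ‖F n y‖ ≤ 1 := fun n y => by
    rw [Real.norm_of_nonneg (hF0 n y)]; exact min_le_left _ _
  have hlim : Tendsto (fun n => ∫ y, F n y ∂pm) atTop (nhds 0) := by
    have := tendsto_integral_of_dominated_convergence (μ := pm) (F := F) (f := fun _ => 0)
      (fun _ => 1) (fun n => (hFm n).aestronglyMeasurable) (integrable_const 1)
      (fun n => ae_of_all _ (hFb n)) (ae_of_all _ fun y => by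
        have h := (tendsto_pow_atTop_nhds_zero_of_lt_one hα0 hα1).mul_const
          (2 + β * |p.1| + β * |y.1|)
        rw [zero_mul] at h
        exact squeeze_zero (fun n => hF0 n y) (fun n => min_le_right _ _) h)
    simpa using this
  refine squeeze_zero (fun n => Real.iSup_nonneg fun B => Real.iSup_nonneg fun _ => abs_nonneg _)
    (fun n => ?_) hlim
  have hI0 : 0 ≤ ∫ y, F n y ∂pm := integral_nonneg (hF0 n)
  refine Real.iSup_le (fun B => Real.iSup_le (fun hB => ?_) hI0) hI0
  have hφ : IsTest (B.indicator fun _ => (1 : ℝ)) := by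
    refine ⟨measurable_const.indicator hB, fun x => ?_⟩
    by_cases hx : x ∈ B <;> simp [hx]
  set ψ := (mop κ)^[n] (B.indicator fun _ => (1 : ℝ)) with hψ_def
  have hψ : IsTest ψ := isTest_mop_iterate hφ n
  have h1 : (pm B).toReal = ∫ y, ψ y ∂pm := by
    rw [← (integral_iterate_bind κ pm n).2 _ hφ, Function.iterate_fixed hinv]
    simp [integral_indicator hB, measureReal_def]
  have h2 : (nstep κ n p B).toReal = ψ p := by
    have := (integral_iterate_bind κ (Measure.dirac p) n).2 _ hφ
    rw [integral_dirac] at this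
    rw [hψ_def, ← this]
    simp [integral_indicator hB, measureReal_def, nstep]
  have h3 : (pm B).toReal - (nstep κ n p B).toReal = ∫ y, (ψ y - ψ p) ∂pm := by
    rw [integral_sub (hψ.integrable _) (integrable_const _), h1, h2]; simp
  rw [h3]
  refine (abs_integral_le_integral_abs).trans (integral_mono
    ((hψ.integrable _).sub (integrable_const _)).abs
    (Integrable.of_bound (hFm n).aestronglyMeasurable 1 (ae_of_all _ (hFb n))) fun y => ?_)
  refine le_min ?_ ?_
  · rw [abs_le]; constructor <;> linarith [(hψ.2 y).1, (hψ.2 y).2, (hψ.2 p).1, (hψ.2 p).2]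
  · rw [abs_sub_comm]; exact hiter _ hφ n p y
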